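/- arXiv:1906.07957 — 6 statements merged into one kernel-verified Lean document; each statement's English description precedes it below -/
import Mathlib

section
/- Let t ∈ {1,…,T}, j ∈ S, and let n ∈ S^(t) satisfy n_ℓ ≠ 1 for every ℓ ∈ S_AR. Then the forward quantity satisfies the recursion α^(t)_n(j) = f_t(j, n) · Σ_{i ∈ S_AR^c} p_{ij} · α^(t−1)_{n−1}(i), where n − 1 denotes the vector n minus the all-ones vector. -/
open Finset

namespace MRS

/-- Time since the last visit to the regime with value `j` strictly before time `t`;
equals `t + 1` if that regime was never visited before time `t`. -/
def counter {M : ℕ} (r : ℕ → Fin M) (t : ℕ) (j : ℕ) : ℕ :=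
  if h : ((Finset.range t).filter fun τ => (r τ : ℕ) = j).Nonempty then
    t - ((Finset.range t).filter fun τ => (r τ : ℕ) = j).max' h
  else t + 1

/-- Counter vector for the `k` AR(1) regimes (the regimes with values `0, …, k-1`). -/
def nvec {M : ℕ} (k : ℕ) (r : ℕ → Fin M) (t : ℕ) : Fin k → ℕ :=
  fun j => counter r t (j : ℕ)

/-- Extend a finite path to a stream (values beyond the end repeat the last value;
they are never used for counters up to time `t`). -/
def pad {M t : ℕ} (r : Fin (t + 1) → Fin M) : ℕ → Fin M :=
  fun s => r ⟨min s t, Nat.lt_succ_of_le (min_le_right s t)⟩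

/-- The set `S^(t)` of possible counter vectors at time `t`: every entry lies in
`{1, …, t+1}`, at most `min t k` entries differ from `t+1`, and the entries different
from `t+1` are pairwise distinct. -/
def Sset (k t : ℕ) : Finset (Fin k → ℕ) :=
  (Fintype.piFinset fun _ : Fin k => Finset.Icc 1 (t + 1)).filter fun n =>
    (Finset.univ.filter fun j => n j ≠ t + 1).card ≤ min t k ∧
      ∀ i j : Fin k, i ≠ j → n i ≠ t + 1 → n j ≠ t + 1 → n i ≠ n j

/-- Weight of a (partial) path `r = (r_0, …, r_t)`:
`π_{r_0} f_0(r_0) ∏_{s=1}^t p_{r_{s-1} r_s} f_s(r_s, n_s(r))`. -/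
noncomputable def wpath {M : ℕ} (k : ℕ) (pi0 : Fin M → ℝ) (p : Fin M → Fin M → ℝ)
    (f0 : Fin M → ℝ) (f : ℕ → Fin M → (Fin k → ℕ) → ℝ) {t : ℕ}
    (r : Fin (t + 1) → Fin M) : ℝ :=
  pi0 (r 0) * f0 (r 0) *
    ∏ s ∈ Finset.Icc 1 t, p (pad r (s - 1)) (pad r s) * f s (pad r s) (nvec k (pad r) s)

/-- Forward quantity `α^(t)_n(j)`: total weight of partial paths ending in regime `j`
at time `t` with counter vector `n`. -/
noncomputable def alpha {M : ℕ} (k : ℕ) (pi0 : Fin M → ℝ) (p : Fin M → Fin M → ℝ)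
    (f0 : Fin M → ℝ) (f : ℕ → Fin M → (Fin k → ℕ) → ℝ)
    (t : ℕ) (n : Fin k → ℕ) (j : Fin M) : ℝ :=
  ∑ r ∈ Finset.univ.filter
      (fun r : Fin (t + 1) → Fin M => r (Fin.last t) = j ∧ nvec k (pad r) t = n),
    wpath k pi0 p f0 f r

end MRS

/-! Appending one regime to a path multiplies its weight by the last transition and emission
factors, and the new counter vector depends on the old path only through its last regime and last
counter vector: every counter goes up by one, except that the counter of the regime just left is
reset to `1`. If no entry of the new vector is `1`, nothing was reset, so the regime just left is
not an AR(1) regime and the old counter vector is `n - 1`. Grouping the shortened paths by their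
last regime gives the recursion. -/

theorem sum_filter_last_eq_sum_snoc {α β : Type*} [Fintype α] [DecidableEq α] [AddCommMonoid β]
    {m : ℕ} (a : α) (P : (Fin (m + 1) → α) → Prop) [DecidablePred P]
    (g : (Fin (m + 1) → α) → β) :
    ∑ r : Fin (m + 1) → α with r (Fin.last m) = a ∧ P r, g r =
      ∑ r : Fin m → α with P (Fin.snoc (α := fun _ => α) r a),
        g (Fin.snoc (α := fun _ => α) r a) := by
  have snoc_init {r : Fin (m + 1) → α} (hr : r (Fin.last m) = a) :
      Fin.snoc (α := fun _ => α) (Fin.init r) a = r := by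
    rw [← hr, Fin.snoc_init_self]
  refine Finset.sum_nbij' (fun r => Fin.init r) (fun r => Fin.snoc (α := fun _ => α) r a)
    ?_ ?_ ?_ ?_ ?_ <;> simp +contextual [snoc_init]

namespace MRS

variable {M k t : ℕ}

/-- The transition map of the counter vectors: the effect on the vector `m` of spending one time
step in regime `i`. As in `counter`, regimes are identified with their values in `ℕ`. -/
def counterStep (i : ℕ) (m : Fin k → ℕ) : Fin k → ℕ :=
  fun ℓ => if i = ℓ then 1 else m ℓ + 1

theorem counterStep_eq_iff {i : ℕ} {m n : Fin k → ℕ} (hn : ∀ ℓ, 1 < n ℓ) :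
    counterStep i m = n ↔ k ≤ i ∧ m = fun ℓ => n ℓ - 1 := by
  constructor
  · rintro rfl
    have no_reset (ℓ : Fin k) : i ≠ ℓ := fun h => by simpa [counterStep, h] using hn ℓ
    refine ⟨not_lt.mp fun hi => no_reset ⟨i, hi⟩ rfl, ?_⟩
    simp [counterStep, no_reset]
  · rintro ⟨hi, rfl⟩
    funext ℓ
    have no_reset : i ≠ ℓ := (ℓ.isLt.trans_le hi).ne'
    simp [counterStep, no_reset, Nat.sub_add_cancel (hn ℓ).le]

theorem counter_congr {r r' : ℕ → Fin M} (h : ∀ s < t, r s = r' s) (j : ℕ) :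
    counter r t j = counter r' t j := by
  have visits_eq : {τ ∈ range t | (r τ : ℕ) = j} = {τ ∈ range t | (r' τ : ℕ) = j} :=
    filter_congr fun τ hτ => by rw [h τ (mem_range.mp hτ)]
  simp only [counter, visits_eq]

theorem counter_succ_self (r : ℕ → Fin M) (t : ℕ) : counter r (t + 1) (r t) = 1 := by
  have mem_visits : t ∈ {τ ∈ range (t + 1) | (r τ : ℕ) = r t} := by simp
  have max_eq : {τ ∈ range (t + 1) | (r τ : ℕ) = r t}.max' ⟨t, mem_visits⟩ = t :=
    (max'_eq_iff _ _ _).mpr ⟨mem_visits, fun τ hτ =>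
      Nat.lt_succ_iff.mp (mem_range.mp (mem_filter.mp hτ).1)⟩
  rw [counter, dif_pos ⟨t, mem_visits⟩, max_eq, Nat.add_sub_cancel_left]

theorem counter_succ_of_ne {r : ℕ → Fin M} {j : ℕ} (h : (r t : ℕ) ≠ j) :
    counter r (t + 1) j = counter r t j + 1 := by
  have visits_eq : {τ ∈ range (t + 1) | (r τ : ℕ) = j} = {τ ∈ range t | (r τ : ℕ) = j} := by
    rw [range_add_one, filter_insert, if_neg h]
  simp only [counter, visits_eq]
  split_ifs with hne
  · have max_lt : {τ ∈ range t | (r τ : ℕ) = j}.max' hne < t :=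
      mem_range.mp (mem_filter.mp (max'_mem _ hne)).1
    exact Nat.sub_add_comm max_lt.le
  · rfl

theorem nvec_succ (k : ℕ) (r : ℕ → Fin M) (t : ℕ) :
    nvec k r (t + 1) = counterStep (r t) (nvec k r t) := by
  funext ℓ
  unfold nvec counterStep
  split_ifs with h
  · rw [← h, counter_succ_self]
  · exact counter_succ_of_ne h

theorem one_le_of_mem_Sset {n : Fin k → ℕ} (hn : n ∈ Sset k t) (ℓ : Fin k) : 1 ≤ n ℓ :=
  (mem_Icc.mp (Fintype.mem_piFinset.mp (mem_filter.mp hn).1 ℓ)).1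

theorem pad_of_le (r : Fin (t + 1) → Fin M) {s : ℕ} (hs : s ≤ t) :
    pad r s = r ⟨s, Nat.lt_succ_of_le hs⟩ := by
  simp only [pad, min_eq_left hs]

theorem pad_last (r : Fin (t + 1) → Fin M) : pad r t = r (Fin.last t) :=
  pad_of_le r le_rfl

theorem pad_snoc_of_le (r : Fin (t + 1) → Fin M) (j : Fin M) {s : ℕ} (hs : s ≤ t) :
    pad (Fin.snoc (α := fun _ => Fin M) r j) s = pad r s := by
  rw [pad_of_le _ (Nat.le_succ_of_le hs), pad_of_le r hs]
  exact Fin.snoc_castSucc (α := fun _ => Fin M) j r ⟨s, Nat.lt_succ_of_le hs⟩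

theorem nvec_pad_snoc (k : ℕ) (r : Fin (t + 1) → Fin M) (j : Fin M) {s : ℕ} (hs : s ≤ t + 1) :
    nvec k (pad (Fin.snoc (α := fun _ => Fin M) r j)) s = nvec k (pad r) s :=
  funext fun ℓ => counter_congr
    (fun _ hτ => pad_snoc_of_le r j (Nat.lt_succ_iff.mp (hτ.trans_le hs))) ℓ

variable (pi0 : Fin M → ℝ) (p : Fin M → Fin M → ℝ) (f0 : Fin M → ℝ)
  (f : ℕ → Fin M → (Fin k → ℕ) → ℝ)

theorem wpath_snoc (r : Fin (t + 1) → Fin M) (j : Fin M) :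
    wpath k pi0 p f0 f (Fin.snoc (α := fun _ => Fin M) r j) =
      wpath k pi0 p f0 f r * (p (r (Fin.last t)) j * f (t + 1) j (nvec k (pad r) (t + 1))) := by
  have head_eq : Fin.snoc (α := fun _ => Fin M) r j 0 = r 0 :=
    Fin.snoc_castSucc (α := fun _ => Fin M) j r 0
  have factor_eq : ∀ s ∈ Icc 1 t,
      p (pad (Fin.snoc (α := fun _ => Fin M) r j) (s - 1))
            (pad (Fin.snoc (α := fun _ => Fin M) r j) s) *
          f s (pad (Fin.snoc (α := fun _ => Fin M) r j) s)
            (nvec k (pad (Fin.snoc (α := fun _ => Fin M) r j)) s) =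
        p (pad r (s - 1)) (pad r s) * f s (pad r s) (nvec k (pad r) s) := by
    intro s hs
    have hst : s ≤ t := (mem_Icc.mp hs).2
    rw [pad_snoc_of_le r j hst, pad_snoc_of_le r j ((Nat.sub_le s 1).trans hst),
      nvec_pad_snoc k r j (Nat.le_succ_of_le hst)]
  rw [wpath, prod_Icc_succ_top (Nat.le_add_left 1 t), head_eq, prod_congr rfl factor_eq,
    Nat.add_sub_cancel, pad_snoc_of_le r j le_rfl, nvec_pad_snoc k r j le_rfl, pad_last, pad_last,
    Fin.snoc_last (α := fun _ => Fin M), ← mul_assoc, wpath]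

theorem alpha_succ (t : ℕ) (n : Fin k → ℕ) (j : Fin M) :
    alpha k pi0 p f0 f (t + 1) n j = f (t + 1) j n *
      ∑ r : Fin (t + 1) → Fin M with counterStep (r (Fin.last t)) (nvec k (pad r) t) = n,
        p (r (Fin.last t)) j * wpath k pi0 p f0 f r := by
  rw [alpha, sum_filter_last_eq_sum_snoc, mul_sum]
  simp only [nvec_pad_snoc k _ j le_rfl, nvec_succ, pad_last, wpath_snoc]
  refine sum_congr rfl fun r hr => ?_
  rw [(mem_filter.mp hr).2]
  ring

theorem sum_mul_alpha (Q : Fin M → Prop) [DecidablePred Q] (c : Fin M → ℝ) (t : ℕ)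
    (n : Fin k → ℕ) :
    ∑ i with Q i, c i * alpha k pi0 p f0 f t n i =
      ∑ r : Fin (t + 1) → Fin M with Q (r (Fin.last t)) ∧ nvec k (pad r) t = n,
        c (r (Fin.last t)) * wpath k pi0 p f0 f r := by
  have mem_comm (i : Fin M) (r : Fin (t + 1) → Fin M) :
      i ∈ univ.filter Q ∧ r ∈ univ.filter (fun r => r (Fin.last t) = i ∧ nvec k (pad r) t = n) ↔
        i ∈ ({r (Fin.last t)} : Finset (Fin M)) ∧
          r ∈ univ.filter (fun r => Q (r (Fin.last t)) ∧ nvec k (pad r) t = n) := by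
    simp only [mem_filter_univ, mem_singleton]
    grind
  simp only [alpha, mul_sum]
  rw [sum_comm' mem_comm]
  simp only [sum_singleton]

end MRS

open MRS in
theorem forward_recursion_no_reset_general {M k : ℕ} (pi0 : Fin M → ℝ)
    (p : Fin M → Fin M → ℝ) (f0 : Fin M → ℝ) (f : ℕ → Fin M → (Fin k → ℕ) → ℝ)
    {t : ℕ} (ht : 1 ≤ t) (j : Fin M) {n : Fin k → ℕ} (hn : ∀ ℓ, 1 < n ℓ) :
    alpha k pi0 p f0 f t n j =
      f t j n * ∑ i ∈ univ.filter (fun i : Fin M => k ≤ (i : ℕ)),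
        p i j * alpha k pi0 p f0 f (t - 1) (fun ℓ => n ℓ - 1) i := by
  obtain ⟨u, rfl⟩ := Nat.exists_eq_add_of_le' ht
  simp only [alpha_succ, counterStep_eq_iff hn, Nat.add_sub_cancel, sum_mul_alpha]

open MRS in
/-- Forward recursion when no counter equals `1`:
`α^(t)_n(j) = f_t(j,n) · ∑_{i ∈ S_AR^c} p_{ij} · α^(t-1)_{n-1}(i)`. -/
theorem forward_recursion_no_reset (M k T : ℕ) (hM : 2 ≤ M) (hk : 1 ≤ k) (hkM : k < M)
    (hT : 1 ≤ T)
    (pi0 : Fin M → ℝ) (p : Fin M → Fin M → ℝ) (f0 : Fin M → ℝ)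
    (f : ℕ → Fin M → (Fin k → ℕ) → ℝ)
    (hpi : ∀ i, 0 ≤ pi0 i) (hpisum : ∑ i, pi0 i = 1)
    (hp : ∀ i j, 0 ≤ p i j) (hprow : ∀ i, ∑ j, p i j = 1)
    (hf0 : ∀ i, 0 ≤ f0 i) (hf : ∀ t j n, 0 ≤ f t j n)
    (t : ℕ) (ht1 : 1 ≤ t) (htT : t ≤ T) (j : Fin M)
    (n : Fin k → ℕ) (hn : n ∈ Sset k t) (hn1 : ∀ ℓ : Fin k, n ℓ ≠ 1) :
    alpha k pi0 p f0 f t n j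
      = f t j n *
          ∑ i ∈ Finset.univ.filter (fun i : Fin M => k ≤ (i : ℕ)),
            p i j * alpha k pi0 p f0 f (t - 1) (fun ℓ => n ℓ - 1) i := by
  exact forward_recursion_no_reset_general pi0 p f0 f ht1 j fun ℓ =>
    (one_le_of_mem_Sset hn ℓ).lt_of_ne' (hn1 ℓ)
end

section
/- The likelihood, i.e. the total weight of all regime sequences, equals the total final forward quantity: Σ_{r ∈ S^{T+1}} w(r) = Σ_{j ∈ S} Σ_{n ∈ S^(T)} α^(T)_n(j). -/
open Finset

/-!
Every path `r` has exactly one final regime `r T` and exactly one final counter vector, and grouping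
the paths by this pair produces the forward quantities, provided that the counter vector lies in
`Sset k T`. It does because an entry `c ≠ T + 1` records a visit at time `T - c`: it determines its
regime, so distinct regimes have distinct such entries, and at most `T` of them fit into
`{1, …, T}`.
-/

namespace MRS

section Counter

variable {M : ℕ} (k : ℕ) (r : ℕ → Fin M) (t : ℕ)

theorem counter_eq_or_exists (j : ℕ) :
    counter r t j = t + 1 ∨ ∃ τ < t, (r τ : ℕ) = j ∧ counter r t j = t - τ := by
  unfold counter
  split_ifs with visited
  · obtain ⟨lt_t, at_j⟩ := mem_filter.1 (max'_mem _ visited)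
    exact .inr ⟨_, mem_range.1 lt_t, at_j, rfl⟩
  · exact .inl rfl

theorem counter_mem_Icc (j : ℕ) : counter r t j ∈ Icc 1 (t + 1) := by
  rw [mem_Icc]
  rcases counter_eq_or_exists r t j with h | ⟨τ, hτ, -, h⟩ <;> omega

variable {r t} in
theorem val_apply_sub_counter {j : ℕ} (h : counter r t j ≠ t + 1) :
    (r (t - counter r t j) : ℕ) = j := by
  obtain ⟨τ, hτ, rfl, h_eq⟩ := (counter_eq_or_exists r t j).resolve_left h
  rw [h_eq, Nat.sub_sub_self hτ.le]

theorem injOn_counter : Set.InjOn (counter r t) {j | counter r t j ≠ t + 1} := by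
  intro i hi j hj hij
  rw [← val_apply_sub_counter hi, hij, val_apply_sub_counter hj]

theorem injOn_nvec : Set.InjOn (nvec k r t) {j | nvec k r t j ≠ t + 1} :=
  fun _ hi _ hj hij => Fin.ext (injOn_counter r t hi hj hij)

end Counter

theorem card_filter_ne_succ_le_of_injOn {ι : Type*} [Fintype ι] {t : ℕ} {n : ι → ℕ}
    (mem_Icc_n : ∀ j, n j ∈ Icc 1 (t + 1)) (inj : Set.InjOn n {j | n j ≠ t + 1}) :
    #{j | n j ≠ t + 1} ≤ t := by
  have maps_to : ∀ j ∈ ({j | n j ≠ t + 1} : Finset ι), n j ∈ Icc 1 t := by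
    intro j hj
    have ne_j := (mem_filter.1 hj).2
    have mem_j := mem_Icc.1 (mem_Icc_n j)
    exact mem_Icc.2 (by omega)
  simpa using card_le_card_of_injOn n maps_to (by simpa using inj)

theorem mem_Sset_iff_injOn {k t : ℕ} {n : Fin k → ℕ} :
    n ∈ Sset k t ↔ (∀ j, n j ∈ Icc 1 (t + 1)) ∧ Set.InjOn n {j | n j ≠ t + 1} := by
  rw [Sset, mem_filter, Fintype.mem_piFinset]
  refine and_congr_right fun mem_Icc_n => ⟨fun ⟨_, distinct⟩ i hi j hj hij => ?_, fun inj => ?_⟩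
  · by_contra i_ne_j
    exact distinct i j i_ne_j hi hj hij
  · have card_le_k : #{j | n j ≠ t + 1} ≤ k := (card_le_univ _).trans_eq (Fintype.card_fin k)
    exact ⟨le_min (card_filter_ne_succ_le_of_injOn mem_Icc_n inj) card_le_k,
      fun i j i_ne_j hi hj hij => i_ne_j (inj hi hj hij)⟩

theorem nvec_mem_Sset {M : ℕ} (k : ℕ) (r : ℕ → Fin M) (t : ℕ) : nvec k r t ∈ Sset k t :=
  mem_Sset_iff_injOn.2 ⟨fun j => counter_mem_Icc r t j, injOn_nvec k r t⟩

end MRS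

open MRS in
theorem likelihood_eq_sum_forward_general {M : ℕ} {A : Type*} [AddCommMonoid A] (k T : ℕ)
    (w : (Fin (T + 1) → Fin M) → A) :
    ∑ r, w r = ∑ j, ∑ n ∈ Sset k T, ∑ r with r (Fin.last T) = j ∧ nvec k (pad r) T = n, w r := by
  have key_mem : ∀ r ∈ (univ : Finset (Fin (T + 1) → Fin M)),
      (r (Fin.last T), nvec k (pad r) T) ∈ univ ×ˢ Sset k T :=
    fun r _ => mk_mem_product (mem_univ _) (nvec_mem_Sset k (pad r) T)
  rw [← sum_fiberwise_of_maps_to key_mem w, sum_product]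
  simp only [Prod.mk.injEq]

open MRS in
/-- The likelihood (total weight of all regime sequences) equals the
total final forward quantity: `∑_{r ∈ S^{T+1}} w(r) = ∑_{j ∈ S} ∑_{n ∈ S^(T)} α^(T)_n(j)`. -/
theorem likelihood_eq_sum_forward (M k T : ℕ) (hM : 2 ≤ M) (hk : 1 ≤ k) (hkM : k < M)
    (hT : 1 ≤ T)
    (pi0 : Fin M → ℝ) (p : Fin M → Fin M → ℝ) (f0 : Fin M → ℝ)
    (f : ℕ → Fin M → (Fin k → ℕ) → ℝ)
    (hpi : ∀ i, 0 ≤ pi0 i) (hpisum : ∑ i, pi0 i = 1)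
    (hp : ∀ i j, 0 ≤ p i j) (hprow : ∀ i, ∑ j, p i j = 1)
    (hf0 : ∀ i, 0 ≤ f0 i) (hf : ∀ t j n, 0 ≤ f t j n) :
    ∑ r : Fin (T + 1) → Fin M, wpath k pi0 p f0 f r
      = ∑ j : Fin M, ∑ n ∈ Sset k T, alpha k pi0 p f0 f T n j :=
  likelihood_eq_sum_forward_general k T (wpath k pi0 p f0 f)
end

section
/- For all integers t ≥ 1 and k ≥ 1, Σ_{m=0}^{min(t,k)} C(t,m)·C(k,m)·m! ≤ (k+1)·t^k·k^k / k!, where C(·,·) denotes the binomial coefficient. (This is the bound on |S^(t)| underlying the O(M²T^{k+1}k^k) complexity of the forward algorithm.) -/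
/-!
Multiplied by `k!`, each summand splits as `(C(t,m)·m!)·(C(k,m)·k!)`. The first factor is a falling
factorial of length `m`, the second a product of two falling factorials of `k` of total length `k`,
so the summand is at most `t^m·k^k`; there are at most `k + 1` summands.
-/

theorem choose_mul_factorial_eq_descFactorial_mul_descFactorial {n m : ℕ} (h : m ≤ n) :
    n.choose m * n.factorial = n.descFactorial m * n.descFactorial (n - m) := by
  have factorial_split : m.factorial * n.descFactorial (n - m) = n.factorial := by
    simpa only [Nat.sub_sub_self h] using Nat.factorial_mul_descFactorial (Nat.sub_le n m)
  rw [← factorial_split, Nat.descFactorial_eq_factorial_mul_choose n m]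
  ring

theorem choose_mul_factorial_le_pow_self (n m : ℕ) : n.choose m * n.factorial ≤ n ^ n := by
  rcases le_or_gt m n with h | h
  · calc n.choose m * n.factorial = n.descFactorial m * n.descFactorial (n - m) :=
          choose_mul_factorial_eq_descFactorial_mul_descFactorial h
      _ ≤ n ^ m * n ^ (n - m) :=
          Nat.mul_le_mul (Nat.descFactorial_le_pow n m) (Nat.descFactorial_le_pow n (n - m))
      _ = n ^ n := pow_mul_pow_sub n h
  · simp [Nat.choose_eq_zero_of_lt h]

theorem choose_mul_choose_mul_factorial_mul_factorial_le (t k m : ℕ) :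
    t.choose m * k.choose m * m.factorial * k.factorial ≤ t ^ m * k ^ k :=
  calc t.choose m * k.choose m * m.factorial * k.factorial
      = t.descFactorial m * (k.choose m * k.factorial) := by
        rw [Nat.descFactorial_eq_factorial_mul_choose]; ring
    _ ≤ t ^ m * k ^ k :=
        Nat.mul_le_mul (Nat.descFactorial_le_pow t m) (choose_mul_factorial_le_pow_self k m)

/-- For all integers `t ≥ 1` and `k ≥ 1`,
`∑_{m=0}^{min(t,k)} C(t,m)·C(k,m)·m! ≤ (k+1)·t^k·k^k / k!`. -/
theorem card_Sset_bound (t k : ℕ) (ht : 1 ≤ t) (hk : 1 ≤ k) :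
    ((∑ m ∈ Finset.range (min t k + 1), t.choose m * k.choose m * m.factorial : ℕ) : ℝ)
      ≤ ((k : ℝ) + 1) * (t : ℝ) ^ k * (k : ℝ) ^ k / (k.factorial : ℝ) := by
  have summand_le : ∀ m ∈ Finset.range (min t k + 1),
      t.choose m * k.choose m * m.factorial * k.factorial ≤ t ^ k * k ^ k := by
    intro m hm
    have m_le_k : m ≤ k := (Finset.mem_range_succ_iff.mp hm).trans (min_le_right t k)
    exact (choose_mul_choose_mul_factorial_mul_factorial_le t k m).trans
      (Nat.mul_le_mul_right _ (Nat.pow_le_pow_right ht m_le_k))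
  rw [le_div_iff₀ (by positivity)]
  norm_cast
  calc (∑ m ∈ Finset.range (min t k + 1), t.choose m * k.choose m * m.factorial) * k.factorial
      = ∑ m ∈ Finset.range (min t k + 1),
          t.choose m * k.choose m * m.factorial * k.factorial := Finset.sum_mul ..
    _ ≤ (min t k + 1) * (t ^ k * k ^ k) := by
        simpa only [Finset.card_range, smul_eq_mul] using Finset.sum_le_card_nsmul _ _ _ summand_le
    _ ≤ (k + 1) * (t ^ k * k ^ k) := by gcongr; exact min_le_right t k
    _ = (k + 1) * t ^ k * k ^ k := (mul_assoc ..).symm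
end

section
/- For all integers T ≥ 2 and k ≥ 1, Σ_{t=0}^{T−1} Σ_{m=0}^{min(t,k)} C(t,m)·C(k,m)·m! ≤ T·(T−1)^k·k^{k−1}·(k+1) / (k−1)!, where C(·,·) denotes the binomial coefficient. (This is the bound Σ_{t=0}^{T−1} |S^(t)| ≤ T(T−1)^k k^{k−1}(k+1)/(k−1)! underlying the O(M²T^{k+1}k^k) complexity of the backward algorithm.) -/
/-!
Since `C(t, m) · m! ≤ t ^ m`, the binomial theorem bounds the inner sum by `(t + 1) ^ k ≤ T ^ k`, so
the double sum is at most `T · T ^ k ≤ T · 2 ^ k · (T - 1) ^ k`. The factor `2 ^ k` is absorbed by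
`2 ^ n · n! ≤ (n + 1) ^ n` at `n = k - 1`, which follows from Bernoulli's inequality by induction.
-/

theorem two_mul_pow_self_le_add_one_pow {n : ℕ} (hn : n ≠ 0) :
    2 * n ^ n ≤ (n + 1) ^ n :=
  calc 2 * n ^ n = n ^ n + n * n ^ (n - 1) * 1 := by rw [mul_one, mul_pow_sub_one hn, two_mul]
    _ ≤ (n + 1) ^ n := pow_add_mul_le_add_pow n.zero_le (Nat.zero_le _) n

theorem two_pow_mul_factorial_le_add_one_pow (n : ℕ) :
    2 ^ n * n.factorial ≤ (n + 1) ^ n := by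
  induction n with
  | zero => simp
  | succ n ih =>
    calc 2 ^ (n + 1) * (n + 1).factorial
        = 2 * ((n + 1) * (2 ^ n * n.factorial)) := by rw [Nat.factorial_succ]; ring
      _ ≤ 2 * ((n + 1) * (n + 1) ^ n) := by gcongr
      _ = 2 * (n + 1) ^ (n + 1) := by rw [pow_succ']
      _ ≤ (n + 1 + 1) ^ (n + 1) := two_mul_pow_self_le_add_one_pow n.succ_ne_zero

theorem choose_mul_factorial_le_pow (t m : ℕ) : t.choose m * m.factorial ≤ t ^ m := by
  rw [mul_comm, ← Nat.descFactorial_eq_factorial_mul_choose]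
  exact t.descFactorial_le_pow m

theorem sum_pow_mul_choose_le_add_one_pow (s : Finset ℕ) (t k : ℕ) :
    ∑ m ∈ s, t ^ m * k.choose m ≤ (t + 1) ^ k := by
  have choose_support : ∀ m ∈ s, t ^ m * k.choose m ≠ 0 → m ∈ Finset.range (k + 1) :=
    fun m _ hm => Finset.mem_range_succ_iff.2 <|
      Nat.choose_ne_zero_iff.1 (right_ne_zero_of_mul hm)
  calc ∑ m ∈ s, t ^ m * k.choose m
      ≤ ∑ m ∈ Finset.range (k + 1), t ^ m * k.choose m :=
        Finset.sum_le_sum_of_ne_zero choose_support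
    _ = (t + 1) ^ k := by simp [add_pow]

theorem sum_choose_mul_choose_mul_factorial_le_add_one_pow (s : Finset ℕ) (t k : ℕ) :
    ∑ m ∈ s, t.choose m * k.choose m * m.factorial ≤ (t + 1) ^ k :=
  calc ∑ m ∈ s, t.choose m * k.choose m * m.factorial
      ≤ ∑ m ∈ s, t ^ m * k.choose m := Finset.sum_le_sum fun m _ => by
        rw [mul_right_comm]
        exact Nat.mul_le_mul_right _ (choose_mul_factorial_le_pow t m)
    _ ≤ (t + 1) ^ k := sum_pow_mul_choose_le_add_one_pow s t k

theorem sum_range_sum_choose_mul_choose_mul_factorial_le (s : ℕ → Finset ℕ) (T k : ℕ) :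
    ∑ t ∈ Finset.range T, ∑ m ∈ s t, t.choose m * k.choose m * m.factorial ≤ T * T ^ k :=
  calc ∑ t ∈ Finset.range T, ∑ m ∈ s t, t.choose m * k.choose m * m.factorial
      ≤ ∑ _t ∈ Finset.range T, T ^ k := Finset.sum_le_sum fun t ht =>
        (sum_choose_mul_choose_mul_factorial_le_add_one_pow (s t) t k).trans <|
          Nat.pow_le_pow_left (Finset.mem_range.1 ht) k
    _ = T * T ^ k := by simp

/-- For all integers `T ≥ 2` and `k ≥ 1`,
`∑_{t=0}^{T-1} ∑_{m=0}^{min(t,k)} C(t,m)·C(k,m)·m! ≤ T·(T−1)^k·k^{k−1}·(k+1)/(k−1)!`. -/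
theorem sum_card_Sset_bound (T k : ℕ) (hT : 2 ≤ T) (hk : 1 ≤ k) :
    ((∑ t ∈ Finset.range T,
        ∑ m ∈ Finset.range (min t k + 1), t.choose m * k.choose m * m.factorial : ℕ) : ℝ)
      ≤ (T : ℝ) * ((T : ℝ) - 1) ^ k * (k : ℝ) ^ (k - 1) * ((k : ℝ) + 1)
          / ((k - 1).factorial : ℝ) := by
  obtain ⟨n, rfl⟩ := Nat.exists_eq_add_of_le' hk
  have double_sum_le := sum_range_sum_choose_mul_choose_mul_factorial_le
    (fun t => Finset.range (min t (n + 1) + 1)) T (n + 1)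
  have factorial_bound : (2 : ℝ) ^ n * n.factorial ≤ ((n + 1 : ℕ) : ℝ) ^ n :=
    mod_cast two_pow_mul_factorial_le_add_one_pow n
  have two_le_T : (2 : ℝ) ≤ T := mod_cast hT
  have T_sub_one_nonneg : (0 : ℝ) ≤ T - 1 := by linarith
  rw [Nat.add_sub_cancel, le_div_iff₀ (by positivity)]
  calc _ ≤ (T * (T : ℝ) ^ (n + 1)) * n.factorial := by gcongr; exact_mod_cast double_sum_le
    _ ≤ (T * (2 * ((T : ℝ) - 1)) ^ (n + 1)) * n.factorial := by gcongr; linarith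
    _ = T * ((T : ℝ) - 1) ^ (n + 1) * (2 ^ n * n.factorial) * 2 := by rw [mul_pow]; ring
    _ ≤ T * ((T : ℝ) - 1) ^ (n + 1) * ((n + 1 : ℕ) : ℝ) ^ n * (((n + 1 : ℕ) : ℝ) + 1) := by
      gcongr
      norm_cast
      omega
end

section
/- Fix φ ∈ (−1,1) and v > 0. Let I be a finite index set and for each i ∈ I let w_i ≥ 0 be a weight, m_i ≥ 1 an integer lag, and y_i, z_i ∈ ℝ (in the MRS model, y_i = x_t is the current observation, z_i = x_{t−m} the last observation from the AR(1) regime, and w_i = P(R_t = j, N_{t,j} = m | x_{0:T}) a smoothed probability). Define s(m) = (1 − φ^m)/(1 − φ) and r(m) = (1 − φ^{2m})/(1 − φ²), and the weighted AR(1) objective F(α) = −Σ_{i ∈ I} w_i·(y_i − s(m_i)·α − φ^{m_i}·z_i)² / (2·v·r(m_i)). If Σ_{i ∈ I} w_i·A_i > 0, where A_i = s(m_i)·(1+φ)/(1+φ^{m_i}), then the unique global maximiser of F over α ∈ ℝ is α* = (Σ_{i ∈ I} w_i·B_i) / (Σ_{i ∈ I} w_i·A_i), where B_i = (y_i − φ^{m_i}·z_i)·(1+φ)/(1+φ^{m_i}).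 (This is the M-step update for the level parameter α of an AR(1) regime, given φ.) -/
/-! Up to the positive factor `1 / (2 v)`, the objective is minus a least-squares criterion with
coefficients `s(m_i)` and weights `w_i / r(m_i)`. Completing the square around the solution of the
normal equation leaves `(α - α*)²` times the curvature `∑ w_i s(m_i)² / r(m_i)`. The ratio
`s(m) / r(m)` simplifies to `(1 + φ) / (1 + φ ^ m)`, so this curvature is `∑ w_i A_i` and the
right-hand side of the normal equation is `∑ w_i B_i`. -/

section LeastSquares

variable {ι R : Type*} [CommRing R] (t : Finset ι) (c a d : ι → R)

theorem sum_mul_sq_residual_eq_add {β : R}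
    (normal_eq : β * ∑ i ∈ t, c i * a i ^ 2 = ∑ i ∈ t, c i * a i * d i) (α : R) :
    ∑ i ∈ t, c i * (d i - a i * α) ^ 2 =
      ∑ i ∈ t, c i * (d i - a i * β) ^ 2 + (α - β) ^ 2 * ∑ i ∈ t, c i * a i ^ 2 := by
  have expand (x : R) : ∑ i ∈ t, c i * (d i - a i * x) ^ 2 =
      ∑ i ∈ t, c i * d i ^ 2 - 2 * x * ∑ i ∈ t, c i * a i * d i +
        x ^ 2 * ∑ i ∈ t, c i * a i ^ 2 := by
    simp only [Finset.mul_sum, ← Finset.sum_sub_distrib, ← Finset.sum_add_distrib]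
    exact Finset.sum_congr rfl fun i _ => by ring
  rw [expand α, expand β, ← normal_eq]
  ring

theorem sum_mul_sq_residual_lt [LinearOrder R] [IsStrictOrderedRing R] {α β : R}
    (curvature_pos : 0 < ∑ i ∈ t, c i * a i ^ 2)
    (normal_eq : β * ∑ i ∈ t, c i * a i ^ 2 = ∑ i ∈ t, c i * a i * d i) (hne : α ≠ β) :
    ∑ i ∈ t, c i * (d i - a i * β) ^ 2 < ∑ i ∈ t, c i * (d i - a i * α) ^ 2 := by
  rw [sum_mul_sq_residual_eq_add t c a d normal_eq α]
  exact lt_add_of_pos_right _ (mul_pos (sq_pos_of_ne_zero (sub_ne_zero.mpr hne)) curvature_pos)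

end LeastSquares

section AR1

variable {ι K : Type*} [Field K]

/-- The coefficient `s(m)` of the level `α` in the mean of an AR(1) process `m` steps after a known
value, in closed form, hence meaningful for `φ ≠ 1` only. -/
def arLevelCoeff (φ : K) (m : ℕ) : K := (1 - φ ^ m) / (1 - φ)

/-- The ratio `r(m)` of the `m`-step to the one-step conditional variance of an AR(1) process, in
closed form, hence meaningful for `φ ^ 2 ≠ 1` only. -/
def arVarianceFactor (φ : K) (m : ℕ) : K := (1 - φ ^ (2 * m)) / (1 - φ ^ 2)

/-- The weighted AR(1) objective `F(α)`: the part depending on the level `α` of the log-likelihood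
of observations `y i` made `m i` steps after the values `z i`, with weights `w i` and one-step
variance `v`. -/
def arLevelObjective (t : Finset ι) (φ v : K) (w : ι → K) (m : ι → ℕ) (y z : ι → K) (α : K) : K :=
  -∑ i ∈ t, w i * (y i - arLevelCoeff φ (m i) * α - φ ^ m i * z i) ^ 2 /
    (2 * v * arVarianceFactor φ (m i))

theorem arLevelCoeff_div_arVarianceFactor {φ : K} {m : ℕ} (h : φ ^ m ≠ 1) :
    arLevelCoeff φ m / arVarianceFactor φ m = (1 + φ) / (1 + φ ^ m) := by
  have hφ : 1 - φ ≠ 0 := sub_ne_zero.mpr fun h1 => h (by rw [← h1, one_pow])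
  have hs : arLevelCoeff φ m ≠ 0 := div_ne_zero (sub_ne_zero.mpr h.symm) hφ
  have factor : arVarianceFactor φ m = arLevelCoeff φ m * ((1 + φ ^ m) / (1 + φ)) := by
    rw [arVarianceFactor, arLevelCoeff, div_mul_div_comm]
    ring_nf
  rw [factor, div_mul_cancel_left₀ hs, inv_div]

theorem arLevelObjective_eq_neg_sum_mul_sq (t : Finset ι) (φ v : K) (w : ι → K) (m : ι → ℕ)
    (y z : ι → K) (α : K) :
    arLevelObjective t φ v w m y z α =
      -∑ i ∈ t, w i / (2 * v * arVarianceFactor φ (m i)) *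
        (y i - φ ^ m i * z i - arLevelCoeff φ (m i) * α) ^ 2 := by
  rw [arLevelObjective]
  exact congrArg Neg.neg (Finset.sum_congr rfl fun i _ => by ring)

theorem ar1_level_Mstep_general [LinearOrder K] [IsStrictOrderedRing K] (t : Finset ι)
    {φ v : K} (hφ : |φ| ≠ 1) (hv : 0 < v) (w : ι → K) {m : ι → ℕ} (hm : ∀ i ∈ t, m i ≠ 0)
    (y z : ι → K)
    (hA : 0 < ∑ i ∈ t, w i * (arLevelCoeff φ (m i) * ((1 + φ) / (1 + φ ^ m i)))) {α : K}
    (hα : α ≠ (∑ i ∈ t, w i * ((y i - φ ^ m i * z i) * ((1 + φ) / (1 + φ ^ m i)))) /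
      ∑ i ∈ t, w i * (arLevelCoeff φ (m i) * ((1 + φ) / (1 + φ ^ m i)))) :
    arLevelObjective t φ v w m y z α <
      arLevelObjective t φ v w m y z
        ((∑ i ∈ t, w i * ((y i - φ ^ m i * z i) * ((1 + φ) / (1 + φ ^ m i)))) /
          ∑ i ∈ t, w i * (arLevelCoeff φ (m i) * ((1 + φ) / (1 + φ ^ m i)))) := by
  let c : ι → K := fun i => w i / (2 * v * arVarianceFactor φ (m i))
  have ratio (i) (hi : i ∈ t) :
      arLevelCoeff φ (m i) / arVarianceFactor φ (m i) = (1 + φ) / (1 + φ ^ m i) :=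
    arLevelCoeff_div_arVarianceFactor fun h =>
      hφ ((pow_eq_one_iff_of_nonneg (abs_nonneg φ) (hm i hi)).mp (by rw [← abs_pow, h, abs_one]))
  have curvature : ∑ i ∈ t, c i * arLevelCoeff φ (m i) ^ 2 =
      (∑ i ∈ t, w i * (arLevelCoeff φ (m i) * ((1 + φ) / (1 + φ ^ m i)))) / (2 * v) := by
    rw [Finset.sum_div]
    exact Finset.sum_congr rfl fun i hi => by rw [← ratio i hi]; ring
  have moment : ∑ i ∈ t, c i * arLevelCoeff φ (m i) * (y i - φ ^ m i * z i) =
      (∑ i ∈ t, w i * ((y i - φ ^ m i * z i) * ((1 + φ) / (1 + φ ^ m i)))) / (2 * v) := by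
    rw [Finset.sum_div]
    exact Finset.sum_congr rfl fun i hi => by rw [← ratio i hi]; ring
  rw [arLevelObjective_eq_neg_sum_mul_sq, arLevelObjective_eq_neg_sum_mul_sq, neg_lt_neg_iff]
  refine sum_mul_sq_residual_lt t c _ _ ?_ ?_ hα
  · rw [curvature]
    positivity
  · rw [curvature, moment, mul_div_assoc', div_mul_cancel₀ _ hA.ne']

end AR1

/-- M-step update for the level parameter `α` of an AR(1) regime,
given `φ ∈ (-1,1)` and `v > 0`: with `s(m) = (1-φ^m)/(1-φ)`, `r(m) = (1-φ^{2m})/(1-φ²)`,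
`A_i = s(m_i)(1+φ)/(1+φ^{m_i})` and `B_i = (y_i - φ^{m_i} z_i)(1+φ)/(1+φ^{m_i})`, if
`∑ w_i A_i > 0` then `α* = (∑ w_i B_i)/(∑ w_i A_i)` is the unique global maximiser of
`F(α) = -∑ w_i (y_i - s(m_i)α - φ^{m_i} z_i)² / (2 v r(m_i))`. -/
theorem ar1_level_Mstep (φ : ℝ) (hφ₁ : -1 < φ) (hφ₂ : φ < 1) (v : ℝ) (hv : 0 < v)
    (ι : Type) [Fintype ι] (w : ι → ℝ) (hw : ∀ i, 0 ≤ w i)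
    (m : ι → ℕ) (hm : ∀ i, 1 ≤ m i) (y z : ι → ℝ)
    (hA : 0 < ∑ i, w i * ((1 - φ ^ m i) / (1 - φ) * ((1 + φ) / (1 + φ ^ m i))))
    (αstar : ℝ)
    (hα : αstar
      = (∑ i, w i * ((y i - φ ^ m i * z i) * ((1 + φ) / (1 + φ ^ m i)))) /
          ∑ i, w i * ((1 - φ ^ m i) / (1 - φ) * ((1 + φ) / (1 + φ ^ m i)))) :
    ∀ α : ℝ, α ≠ αstar →
      (-∑ i, w i * (y i - (1 - φ ^ m i) / (1 - φ) * α - φ ^ m i * z i) ^ 2 /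
          (2 * v * ((1 - φ ^ (2 * m i)) / (1 - φ ^ 2))))
        < -∑ i, w i * (y i - (1 - φ ^ m i) / (1 - φ) * αstar - φ ^ m i * z i) ^ 2 /
            (2 * v * ((1 - φ ^ (2 * m i)) / (1 - φ ^ 2))) := by
  subst hα
  exact fun α hne => ar1_level_Mstep_general Finset.univ (abs_lt.mpr ⟨hφ₁, hφ₂⟩).ne hv w
    (fun i _ => Nat.one_le_iff_ne_zero.mp (hm i)) y z hA hne
end

section
/- Fix φ ∈ (−1,1) and α ∈ ℝ. Let I be a finite index set and for each i ∈ I let w_i ≥ 0 be a weight with Σ_{i ∈ I} w_i > 0, m_i ≥ 1 an integer lag, and y_i, z_i ∈ ℝ. Define s(m) = (1 − φ^m)/(1 − φ), r(m) = (1 − φ^{2m})/(1 − φ²), C_i = (y_i − s(m_i)·α − φ^{m_i}·z_i)² / r(m_i), and the weighted AR(1) objective G(v) = Σ_{i ∈ I} w_i·(−(1/2)·log(2π·v·r(m_i)) − (y_i − s(m_i)·α − φ^{m_i}·z_i)²/(2·v·r(m_i))) for v > 0. Set v* = (Σ_{i ∈ I} w_i·C_i)/(Σ_{i ∈ I} w_i).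 If v* > 0, then G(v) ≤ G(v*) for all v > 0; i.e., v* is a global maximiser of G on (0,∞). (This is the M-step update for the innovation variance σ² of an AR(1) regime, given φ and α.) -/
/-!
Rescaling a Gaussian variance by a known factor only shifts the log-density by a constant, so up to
an additive constant the objective is `-(W / 2) * (log v + u / v)`, where `W` is the total weight
and `u` the weighted mean of the rescaled squared residuals. The inequality `log x ≤ x - 1` at
`x = u / v` says that `log v + u / v` is smallest at `v = u`. For an AR(1) regime the known factors
are the geometric sums `1 + φ² + ⋯ + φ^(2(m - 1))`, which are positive for every real `φ`.
-/

open Finset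

theorem isMinOn_log_add_div {u : ℝ} (hu : 0 < u) :
    IsMinOn (fun v => Real.log v + u / v) (Set.Ioi 0) u := by
  refine isMinOn_iff.2 fun v (hv : 0 < v) => ?_
  have hlog : Real.log u - Real.log v ≤ u / v - 1 := by
    rw [← Real.log_div hu.ne' hv.ne']
    exact Real.log_le_sub_one_of_pos (div_pos hu hv)
  rw [div_self hu.ne']
  linarith

section WeightedGaussian

variable {ι : Type*} [Fintype ι]

/-- The weighted Gaussian log-likelihood as a function of a common variance parameter `v`, where
observation `i` has weight `w i`, variance `v * r i` and *squared* residual `e i`. -/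
noncomputable def weightedGaussianLogLik (w e r : ι → ℝ) (v : ℝ) : ℝ :=
  ∑ i, w i * (-(1 / 2) * Real.log (2 * Real.pi * (v * r i)) - e i / (2 * v * r i))

/-- The weighted mean of the squared residuals `e i`, each rescaled by its variance factor `r i`:
the candidate maximiser of `weightedGaussianLogLik`. -/
noncomputable def weightedVarianceEstimate (w e r : ι → ℝ) : ℝ :=
  (∑ i, w i * (e i / r i)) / ∑ i, w i

variable (w e : ι → ℝ) {r : ι → ℝ}

theorem weightedGaussianLogLik_eq (hr : ∀ i, 0 < r i) (hw : ∑ i, w i ≠ 0) {v : ℝ} (hv : 0 < v) :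
    weightedGaussianLogLik w e r v =
      ∑ i, w i * (-(1 / 2) * Real.log (2 * Real.pi * r i)) -
        (∑ i, w i) / 2 * (Real.log v + weightedVarianceEstimate w e r / v) := by
  have hterm (i : ι) :
      w i * (-(1 / 2) * Real.log (2 * Real.pi * (v * r i)) - e i / (2 * v * r i)) =
        w i * (-(1 / 2) * Real.log (2 * Real.pi * r i)) -
          (w i * (Real.log v / 2) + w i * (e i / r i) * (1 / (2 * v))) := by
    have hri := hr i
    rw [mul_left_comm _ v, Real.log_mul hv.ne' (by positivity)]
    field
  have hsum : (∑ i, w i) / 2 * (Real.log v + weightedVarianceEstimate w e r / v) =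
      (∑ i, w i) * (Real.log v / 2) + (∑ i, w i * (e i / r i)) * (1 / (2 * v)) := by
    rw [weightedVarianceEstimate]
    field
  rw [weightedGaussianLogLik, sum_congr rfl fun i _ => hterm i, sum_sub_distrib,
    sum_add_distrib, ← sum_mul, ← sum_mul, hsum]

theorem isMaxOn_weightedGaussianLogLik (hr : ∀ i, 0 < r i) (hw : 0 < ∑ i, w i)
    (hpos : 0 < weightedVarianceEstimate w e r) :
    IsMaxOn (weightedGaussianLogLik w e r) (Set.Ioi 0) (weightedVarianceEstimate w e r) := by
  refine isMaxOn_iff.2 fun v hv => ?_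
  rw [weightedGaussianLogLik_eq w e hr hw.ne' hv, weightedGaussianLogLik_eq w e hr hw.ne' hpos]
  gcongr _ - _ * ?_
  exact isMinOn_log_add_div hpos hv

end WeightedGaussian

section AR1

/-- The conditional mean of the AR(1) process `X_t = α + φ X_{t-1} + σ ε_t`, `m` steps after the
value `x`. The geometric sum replaces `(1 - φ ^ m) / (1 - φ)` so that `φ = 1` is covered. -/
def ar1CondMean (φ α : ℝ) (m : ℕ) (x : ℝ) : ℝ :=
  (∑ k ∈ range m, φ ^ k) * α + φ ^ m * x

/-- The ratio of the `m`-step conditional variance of an AR(1) process to its innovation variance.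
The geometric sum replaces `(1 - φ ^ (2 * m)) / (1 - φ ^ 2)` so that `φ = ±1` is covered. -/
def ar1CondVarFactor (φ : ℝ) (m : ℕ) : ℝ :=
  ∑ k ∈ range m, (φ ^ 2) ^ k

theorem ar1CondMean_eq_div {φ : ℝ} (hφ : φ ≠ 1) (α : ℝ) (m : ℕ) (x : ℝ) :
    ar1CondMean φ α m x = (1 - φ ^ m) / (1 - φ) * α + φ ^ m * x := by
  rw [ar1CondMean, geom_sum_eq hφ, ← neg_div_neg_eq, neg_sub, neg_sub]

theorem ar1CondVarFactor_eq_div {φ : ℝ} (hφ : φ ^ 2 ≠ 1) (m : ℕ) :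
    ar1CondVarFactor φ m = (1 - φ ^ (2 * m)) / (1 - φ ^ 2) := by
  rw [ar1CondVarFactor, geom_sum_eq hφ, ← neg_div_neg_eq, neg_sub, neg_sub, pow_mul]

theorem ar1CondVarFactor_pos (φ : ℝ) {m : ℕ} (hm : 1 ≤ m) : 0 < ar1CondVarFactor φ m :=
  geom_sum_pos (sq_nonneg φ) (Nat.one_le_iff_ne_zero.1 hm)

theorem ar1_variance_Mstep_general (φ α : ℝ) {ι : Type*} [Fintype ι] (w : ι → ℝ)
    (hwsum : 0 < ∑ i, w i) (m : ι → ℕ) (hm : ∀ i, 1 ≤ m i) (y z : ι → ℝ) (vstar : ℝ)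
    (hvstar : vstar = weightedVarianceEstimate w
      (fun i => (y i - ar1CondMean φ α (m i) (z i)) ^ 2) (fun i => ar1CondVarFactor φ (m i)))
    (hpos : 0 < vstar) :
    IsMaxOn (weightedGaussianLogLik w (fun i => (y i - ar1CondMean φ α (m i) (z i)) ^ 2)
      (fun i => ar1CondVarFactor φ (m i))) (Set.Ioi 0) vstar := by
  subst hvstar
  exact isMaxOn_weightedGaussianLogLik w _ (fun i => ar1CondVarFactor_pos φ (hm i)) hwsum hpos

end AR1

/-- M-step update for the innovation variance of an AR(1) regime,
given `φ ∈ (-1,1)` and `α`: with `s(m) = (1-φ^m)/(1-φ)`, `r(m) = (1-φ^{2m})/(1-φ²)` and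
`C_i = (y_i - s(m_i)α - φ^{m_i} z_i)² / r(m_i)`, the value `v* = (∑ w_i C_i)/(∑ w_i)`,
if positive, globally maximises
`G(v) = ∑ w_i (-(1/2) log(2π v r(m_i)) - (y_i - s(m_i)α - φ^{m_i} z_i)²/(2 v r(m_i)))`
over `v > 0`. -/
theorem ar1_variance_Mstep (φ α : ℝ) (hφ₁ : -1 < φ) (hφ₂ : φ < 1)
    (ι : Type) [Fintype ι] (w : ι → ℝ) (hw : ∀ i, 0 ≤ w i) (hwsum : 0 < ∑ i, w i)
    (m : ι → ℕ) (hm : ∀ i, 1 ≤ m i) (y z : ι → ℝ)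
    (vstar : ℝ)
    (hvstar : vstar
      = (∑ i, w i * ((y i - (1 - φ ^ m i) / (1 - φ) * α - φ ^ m i * z i) ^ 2 /
            ((1 - φ ^ (2 * m i)) / (1 - φ ^ 2)))) / ∑ i, w i)
    (hpos : 0 < vstar) :
    ∀ v : ℝ, 0 < v →
      (∑ i, w i *
          (-(1 / 2) * Real.log (2 * Real.pi * (v * ((1 - φ ^ (2 * m i)) / (1 - φ ^ 2))))
            - (y i - (1 - φ ^ m i) / (1 - φ) * α - φ ^ m i * z i) ^ 2 /
                (2 * v * ((1 - φ ^ (2 * m i)) / (1 - φ ^ 2)))))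
        ≤ ∑ i, w i *
            (-(1 / 2) *
                Real.log (2 * Real.pi * (vstar * ((1 - φ ^ (2 * m i)) / (1 - φ ^ 2))))
              - (y i - (1 - φ ^ m i) / (1 - φ) * α - φ ^ m i * z i) ^ 2 /
                  (2 * vstar * ((1 - φ ^ (2 * m i)) / (1 - φ ^ 2)))) := by
  have hsq : φ ^ 2 ≠ 1 := ((sq_lt_one_iff_abs_lt_one φ).2 (abs_lt.2 ⟨hφ₁, hφ₂⟩)).ne
  simp only [sub_sub (y _), ← ar1CondMean_eq_div hφ₂.ne, ← ar1CondVarFactor_eq_div hsq] at hvstar ⊢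
  exact fun v hv => ar1_variance_Mstep_general φ α w hwsum m hm y z vstar hvstar hpos hv
end
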